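/- Let P be a collection of nonempty bounded open intervals of ℝ with ∪P = (a,b) for real numbers a < b, and suppose there is a finite sequence x₁, …, xₙ in (a,b) satisfying a = L_P(x₁), R_P(x_i) = x_{i+1} for i = 1, …, n−1, and R_P(xₙ) = b. Then: (1) every outer cover of (a,b) with respect to P has at most n+1 elements; (2) there exists an outer cover of (a,b) with respect to P having ⌊n/2⌋ + 1 elements; (3) there exists an inner cover of (a,b) with respect to P having n+2 elements. -/

import Mathlib

open Set

/-- A linked list of (nonempty bounded open) intervals `(a i, b i)` of `ℝ`, indexed by a
nonempty set `S` of consecutive integers, consecutive intervals overlapping and the chain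
condition `a i < b (i-1) < a (i+1) < b i` holding whenever the indices involved lie in `S`. -/
structure LinkedList where
  S : Set ℤ
  nonempty : S.Nonempty
  consecutive : ∀ i ∈ S, ∀ k ∈ S, ∀ j : ℤ, i ≤ j → j ≤ k → j ∈ S
  a : ℤ → ℝ
  b : ℤ → ℝ
  lt : ∀ i ∈ S, a i < b i
  mono_a : ∀ i : ℤ, i ∈ S → i + 1 ∈ S → a i < a (i + 1)
  mono_b : ∀ i : ℤ, i ∈ S → i + 1 ∈ S → b i < b (i + 1)
  overlap : ∀ i : ℤ, i ∈ S → i + 1 ∈ S → a (i + 1) < b i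
  gap : ∀ i : ℤ, i ∈ S → i + 2 ∈ S → b i < a (i + 2)

namespace LinkedList

/-- The `i`-th interval of the list. -/
def interval (L : LinkedList) (i : ℤ) : Set ℝ := Ioo (L.a i) (L.b i)

/-- The union of the intervals of the list. -/
def union (L : LinkedList) : Set ℝ := ⋃ i ∈ L.S, L.interval i

/-- The list has a least element. -/
def HasLeast (L : LinkedList) : Prop := ∃ i ∈ L.S, ∀ j ∈ L.S, i ≤ j

/-- The list has a greatest element. -/
def HasGreatest (L : LinkedList) : Prop := ∃ i ∈ L.S, ∀ j ∈ L.S, j ≤ i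

end LinkedList

/-- `P` is a collection of nonempty bounded open intervals of `ℝ`. -/
def IsIntervalCollection (P : Set (Set ℝ)) : Prop :=
  ∀ J ∈ P, ∃ c d : ℝ, c < d ∧ J = Ioo c d

/-- An interval is dominated by `P` if it is contained in some member of `P`. -/
def Dominated (P : Set (Set ℝ)) (J : Set ℝ) : Prop := ∃ K ∈ P, J ⊆ K

/-- An interval is approximately dominated by `P` if it is the union of an increasing
sequence of intervals, each dominated by `P`. -/
def ApproxDominated (P : Set (Set ℝ)) (J : Set ℝ) : Prop :=
  ∃ c d : ℕ → ℝ, (∀ n, c n < d n) ∧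
    (∀ n, Ioo (c n) (d n) ⊆ Ioo (c (n + 1)) (d (n + 1))) ∧
    (∀ n, Dominated P (Ioo (c n) (d n))) ∧ J = ⋃ n, Ioo (c n) (d n)

/-- An inner cover of `(x, y)` with respect to `P`: a linked list with union `(x, y)`, each of
whose intervals is approximately dominated by `P`. -/
def IsInnerCover (P : Set (Set ℝ)) (x y : ℝ) (L : LinkedList) : Prop :=
  L.union = Ioo x y ∧ ∀ i ∈ L.S, ApproxDominated P (L.interval i)

/-- An outer cover of `(x, y)` with respect to `P`: a linked list with union `(x, y)` such that
every member of `P` is contained in some interval of the list. -/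
def IsOuterCover (P : Set (Set ℝ)) (x y : ℝ) (L : LinkedList) : Prop :=
  L.union = Ioo x y ∧ ∀ J ∈ P, ∃ i ∈ L.S, J ⊆ L.interval i

/-- `L_P(x)`: the infimum of left endpoints of members of `P` containing `x`. -/
noncomputable def leftEnd (P : Set (Set ℝ)) (x : ℝ) : ℝ :=
  sInf {c | ∃ d, Ioo c d ∈ P ∧ x ∈ Ioo c d}

/-- `R_P(x)`: the supremum of right endpoints of members of `P` containing `x`. -/
noncomputable def rightEnd (P : Set (Set ℝ)) (x : ℝ) : ℝ :=
  sSup {d | ∃ c, Ioo c d ∈ P ∧ x ∈ Ioo c d}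

/-!
Adjoin `y₀ = a` to the points `yᵢ = xᵢ` and put `yᵢ = b` for `i > n`, so that `R_P(yᵢ) = yᵢ₊₁`
for `1 ≤ i ≤ n`.

* In an outer cover, a member of `P` meeting `(-∞, b_k]` lies in some interval of index at most
  `k + 1`, because `b_k < a_{k+2}`; so `x ≤ b_k` forces `R_P(x) ≤ b_{k+1}`. Starting from
  `y₁ < b_i`, which is forced by `L_P(y₁) = a`, one gets `b = y_{n+1} ≤ b_{i+n}`: at most `n`
  intervals follow the `i`-th one, whatever `i` is.
* If `yᵢ ≤ c < yᵢ₊₁`, a member `(c, d)` of `P` has `d ≤ yᵢ₊₂`. Hence the intervals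
  `(y_{2k-1}, y_{2k+2})` form an outer cover.
* An inner cover consists of a left piece `(a, u)`, a right piece `(v, b)`, and one dominated
  interval around each `yᵢ`. The interval around `yᵢ` must reach beyond the left endpoint of the
  next one, and only its right endpoint can be prescribed, so the choices are made from right to
  left.
-/

theorem exists_seq_of_backward_step {α : Type*} {D : ℕ → α → Prop} {r : ℕ → α → α → Prop} {N : ℕ}
    {t : α} (ht : D N t) (step : ∀ i < N, ∀ t, D (i + 1) t → ∃ s, D i s ∧ r i s t) :
    ∃ p : ℕ → α, p N = t ∧ (∀ i ≤ N, D i (p i)) ∧ ∀ i < N, r i (p i) (p (i + 1)) := by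
  induction N generalizing t with
  | zero => exact ⟨fun _ => t, rfl, by simpa using ht, by simp⟩
  | succ N ih =>
    obtain ⟨s, hs, hst⟩ := step N N.lt_succ_self t ht
    obtain ⟨p, hpN, hpD, hpr⟩ := ih hs fun i hi => step i (hi.trans N.lt_succ_self)
    refine ⟨Function.update p (N + 1) t, by simp, fun i hi => ?_, fun i hi => ?_⟩
    · rcases hi.eq_or_lt with rfl | hi
      · simpa using ht
      · rw [Function.update_of_ne hi.ne]
        exact hpD i (by omega)
    · rw [Function.update_of_ne hi.ne]
      rcases (Nat.lt_succ_iff.1 hi).eq_or_lt with rfl | hi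
      · simpa [hpN] using hst
      · rw [Function.update_of_ne (by omega)]
        exact hpr i hi

theorem exists_mem_Ioo_of_overlap {α : Type*} [LinearOrder α] {A B : ℕ → α} {N : ℕ} {z : α}
    (overlap : ∀ i < N, A (i + 1) < B i) (hz : z ∈ Ioo (A 0) (B N)) :
    ∃ i ≤ N, z ∈ Ioo (A i) (B i) := by
  induction N with
  | zero => exact ⟨0, le_rfl, hz⟩
  | succ N ih =>
    by_cases hzN : z < B N
    · obtain ⟨i, hi, hzi⟩ := ih (fun i hi => overlap i (hi.trans N.lt_succ_self)) ⟨hz.1, hzN⟩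
      exact ⟨i, hi.trans N.le_succ, hzi⟩
    · exact ⟨N + 1, le_rfl, (overlap N N.lt_succ_self).trans_le (not_lt.1 hzN), hz.2⟩

theorem finite_and_ncard_le_of_forall_le_add {S : Set ℤ} (hS : S.Nonempty) {n : ℕ}
    (h : ∀ i ∈ S, ∀ j ∈ S, j ≤ i + n) : S.Finite ∧ S.ncard ≤ n + 1 := by
  obtain ⟨k, hk⟩ := hS
  have hbdd : BddBelow S := ⟨k - n, fun i hi => by linarith [h i hi k hk]⟩
  have hsub : S ⊆ ↑(Finset.Icc (sInf S) (sInf S + n)) := fun i hi =>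
    Finset.mem_coe.2 (Finset.mem_Icc.2
      ⟨csInf_le hbdd hi, h _ (Int.csInf_mem ⟨k, hk⟩ hbdd) i hi⟩)
  refine ⟨(Finset.finite_toSet _).subset hsub, (ncard_le_ncard hsub).trans ?_⟩
  rw [ncard_coe_finset, Int.card_Icc]
  omega

namespace LinkedList

theorem ordConnected (L : LinkedList) : L.S.OrdConnected :=
  ⟨fun i hi k hk j hj => L.consecutive i hi k hk j hj.1 hj.2⟩

theorem strictMonoOn_a (L : LinkedList) : StrictMonoOn L.a L.S :=
  strictMonoOn_of_lt_add_one L.ordConnected fun i _ => L.mono_a i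

theorem strictMonoOn_b (L : LinkedList) : StrictMonoOn L.b L.S :=
  strictMonoOn_of_lt_add_one L.ordConnected fun i _ => L.mono_b i

theorem le_add_one_of_a_lt_b (L : LinkedList) {i j : ℤ} (hi : i ∈ L.S) (hj : j ∈ L.S)
    (h : L.a j < L.b i) : j ≤ i + 1 := by
  by_contra! hij
  have hi2 : i + 2 ∈ L.S := L.ordConnected.out hi hj ⟨by omega, by omega⟩
  exact h.not_gt <|
    (L.gap i hi hi2).trans_le (L.strictMonoOn_a.monotoneOn hi2 hj (by omega))

theorem bounds_of_union_eq_Ioo {L : LinkedList} {a b : ℝ} (h : L.union = Ioo a b) {i : ℤ}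
    (hi : i ∈ L.S) : a ≤ L.a i ∧ L.b i ≤ b :=
  (Ioo_subset_Ioo_iff (L.lt i hi)).1 <|
    h ▸ subset_biUnion_of_mem (u := fun i => L.interval i) hi

end LinkedList

/-- The chain conditions saying that `(A 0, B 0), …, (A N, B N)` is a linked list. Indexing by
`ℕ` avoids integer casts when a list is written down. -/
structure IsLinked (N : ℕ) (A B : ℕ → ℝ) : Prop where
  lt : ∀ i ≤ N, A i < B i
  mono_a : ∀ i < N, A i < A (i + 1)
  mono_b : ∀ i < N, B i < B (i + 1)
  overlap : ∀ i < N, A (i + 1) < B i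
  gap : ∀ i, i + 2 ≤ N → B i < A (i + 2)

namespace IsLinked

variable {N : ℕ} {A B : ℕ → ℝ}

/-- The linked list `(A 0, B 0), …, (A N, B N)`, indexed by the integers `0, …, N`. -/
def toLinkedList (h : IsLinked N A B) : LinkedList where
  S := Icc 0 N
  nonempty := ⟨0, by simp⟩
  consecutive _ hi _ hk _ hij hjk := ⟨hi.1.trans hij, hjk.trans hk.2⟩
  a i := A i.toNat
  b i := B i.toNat
  lt i hi := by
    lift i to ℕ using hi.1
    exact h.lt i (Int.ofNat_le.1 hi.2)
  mono_a i hi hi' := by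
    lift i to ℕ using hi.1
    exact h.mono_a i (Int.ofNat_le.1 hi'.2)
  mono_b i hi hi' := by
    lift i to ℕ using hi.1
    exact h.mono_b i (Int.ofNat_le.1 hi'.2)
  overlap i hi hi' := by
    lift i to ℕ using hi.1
    exact h.overlap i (Int.ofNat_le.1 hi'.2)
  gap i hi hi' := by
    lift i to ℕ using hi.1
    exact h.gap i (Int.ofNat_le.1 hi'.2)

theorem natCast_mem_S_toLinkedList (h : IsLinked N A B) {k : ℕ} (hk : k ≤ N) :
    (k : ℤ) ∈ h.toLinkedList.S :=
  ⟨k.cast_nonneg, Int.ofNat_le.2 hk⟩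

theorem exists_natCast_eq_of_mem_S (h : IsLinked N A B) {i : ℤ} (hi : i ∈ h.toLinkedList.S) :
    ∃ k ≤ N, (k : ℤ) = i := by
  lift i to ℕ using hi.1
  exact ⟨i, Int.ofNat_le.1 hi.2, rfl⟩

theorem interval_toLinkedList (h : IsLinked N A B) (k : ℕ) :
    h.toLinkedList.interval k = Ioo (A k) (B k) :=
  rfl

theorem ncard_S_toLinkedList (h : IsLinked N A B) : h.toLinkedList.S.ncard = N + 1 := by
  change (Icc (0 : ℤ) N).ncard = N + 1
  rw [← Finset.coe_Icc, ncard_coe_finset, Int.card_Icc]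
  omega

theorem union_toLinkedList (h : IsLinked N A B) : h.toLinkedList.union = Ioo (A 0) (B N) := by
  have h0 := h.natCast_mem_S_toLinkedList N.zero_le
  have hN := h.natCast_mem_S_toLinkedList le_rfl
  refine (iUnion₂_subset fun i hi => ?_).antisymm fun z hz => ?_
  · exact Ioo_subset_Ioo (h.toLinkedList.strictMonoOn_a.monotoneOn h0 hi hi.1)
      (h.toLinkedList.strictMonoOn_b.monotoneOn hi hN hi.2)
  · obtain ⟨k, hk, hzk⟩ := exists_mem_Ioo_of_overlap h.overlap hz
    exact mem_biUnion (h.natCast_mem_S_toLinkedList hk) hzk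

end IsLinked

namespace IsIntervalCollection

variable {P : Set (Set ℝ)} {x t : ℝ}

theorem exists_Ioo_mem (hP : IsIntervalCollection P) (hx : x ∈ ⋃₀ P) :
    ∃ c d, Ioo c d ∈ P ∧ x ∈ Ioo c d := by
  obtain ⟨J, hJ, hxJ⟩ := hx
  obtain ⟨c, d, -, rfl⟩ := hP J hJ
  exact ⟨c, d, hJ, hxJ⟩

theorem exists_lt_of_lt_rightEnd (hP : IsIntervalCollection P) (hx : x ∈ ⋃₀ P)
    (ht : t < rightEnd P x) : ∃ c d, Ioo c d ∈ P ∧ x ∈ Ioo c d ∧ t < d := by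
  obtain ⟨c, d, hcd, hxcd⟩ := hP.exists_Ioo_mem hx
  obtain ⟨d', ⟨c', hcd', hxcd'⟩, htd'⟩ := exists_lt_of_lt_csSup
    (s := {d | ∃ c, Ioo c d ∈ P ∧ x ∈ Ioo c d}) ⟨d, c, hcd, hxcd⟩ ht
  exact ⟨c', d', hcd', hxcd', htd'⟩

theorem exists_lt_of_leftEnd_lt (hP : IsIntervalCollection P) (hx : x ∈ ⋃₀ P)
    (ht : leftEnd P x < t) : ∃ c d, Ioo c d ∈ P ∧ x ∈ Ioo c d ∧ c < t := by
  obtain ⟨c, d, hcd, hxcd⟩ := hP.exists_Ioo_mem hx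
  obtain ⟨c', ⟨d', hcd', hxcd'⟩, hct'⟩ := exists_lt_of_csInf_lt
    (s := {c | ∃ d, Ioo c d ∈ P ∧ x ∈ Ioo c d}) ⟨c, d, hcd, hxcd⟩ ht
  exact ⟨c', d', hcd', hxcd', hct'⟩

end IsIntervalCollection

section Endpoints

variable {P : Set (Set ℝ)} {x : ℝ}

theorem le_rightEnd (hbdd : BddAbove (⋃₀ P)) {c d : ℝ} (hcd : Ioo c d ∈ P) (hx : x ∈ Ioo c d) :
    d ≤ rightEnd P x := by
  obtain ⟨t, ht⟩ := hbdd
  refine le_csSup ⟨t, ?_⟩ ⟨c, hcd, hx⟩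
  rintro d' ⟨c', hcd', hx'⟩
  exact (isLUB_Ioo (hx'.1.trans hx'.2)).2 (upperBounds_mono_set (subset_sUnion_of_mem hcd') ht)

theorem lt_rightEnd (hP : IsIntervalCollection P) (hbdd : BddAbove (⋃₀ P)) (hx : x ∈ ⋃₀ P) :
    x < rightEnd P x := by
  obtain ⟨c, d, hcd, hxcd⟩ := hP.exists_Ioo_mem hx
  exact hxcd.2.trans_le (le_rightEnd hbdd hcd hxcd)

end Endpoints

section ApproxDominated

variable {P : Set (Set ℝ)}

theorem approxDominated_Ioo_of_forall_dominated {c d : ℝ} (hcd : c < d)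
    (h : ∀ c' d', c < c' → d' < d → Dominated P (Ioo c' d')) : ApproxDominated P (Ioo c d) := by
  obtain ⟨m, hcm, hmd⟩ := exists_between hcd
  obtain ⟨u, hu_anti, hu_mem, hu_lim⟩ := exists_seq_strictAnti_tendsto' hcm
  obtain ⟨v, hv_mono, hv_mem, hv_lim⟩ := exists_seq_strictMono_tendsto' hmd
  refine ⟨u, v, fun k => (hu_mem k).2.trans (hv_mem k).1,
    fun k => Ioo_subset_Ioo (hu_anti k.lt_succ_self).le (hv_mono k.lt_succ_self).le,
    fun k => h _ _ (hu_mem k).1 (hv_mem k).2, Subset.antisymm (fun z hz => ?_) ?_⟩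
  · have hz_mem := (hu_lim.eventually_lt_const hz.1).and (hv_lim.eventually_const_lt hz.2)
    exact mem_iUnion.2 hz_mem.exists
  · exact iUnion_subset fun k => Ioo_subset_Ioo (hu_mem k).1.le (hv_mem k).2.le

theorem Dominated.approxDominated {c d : ℝ} (hcd : c < d) (h : Dominated P (Ioo c d)) :
    ApproxDominated P (Ioo c d) := by
  obtain ⟨K, hK, hsub⟩ := h
  exact approxDominated_Ioo_of_forall_dominated hcd fun _ _ hc hd =>
    ⟨K, hK, (Ioo_subset_Ioo hc.le hd.le).trans hsub⟩

variable {x : ℝ}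

theorem approxDominated_Ioo_leftEnd (hP : IsIntervalCollection P) (hx : x ∈ ⋃₀ P) {u : ℝ}
    (hu : leftEnd P x < u) (hux : u ≤ x) : ApproxDominated P (Ioo (leftEnd P x) u) := by
  refine approxDominated_Ioo_of_forall_dominated hu fun c' d' hc' hd' => ?_
  obtain ⟨c, d, hcd, hxcd, hcc'⟩ := hP.exists_lt_of_leftEnd_lt hx hc'
  exact ⟨_, hcd, Ioo_subset_Ioo hcc'.le (by linarith [hxcd.2])⟩

theorem approxDominated_Ioo_rightEnd (hP : IsIntervalCollection P) (hx : x ∈ ⋃₀ P) {v : ℝ}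
    (hxv : x ≤ v) (hv : v < rightEnd P x) : ApproxDominated P (Ioo v (rightEnd P x)) := by
  refine approxDominated_Ioo_of_forall_dominated hv fun c' d' hc' hd' => ?_
  obtain ⟨c, d, hcd, hxcd, hdd'⟩ := hP.exists_lt_of_lt_rightEnd hx hd'
  exact ⟨_, hcd, Ioo_subset_Ioo (by linarith [hxcd.1]) hdd'.le⟩

end ApproxDominated

namespace IsOuterCover

variable {P : Set (Set ℝ)} {a b x : ℝ} {L : LinkedList} {k : ℤ}

theorem exists_le_and_le (hL : IsOuterCover P a b L) {c d : ℝ} (hcd : Ioo c d ∈ P)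
    (hlt : c < d) : ∃ j ∈ L.S, L.a j ≤ c ∧ d ≤ L.b j := by
  obtain ⟨j, hj, hsub⟩ := hL.2 _ hcd
  exact ⟨j, hj, (Ioo_subset_Ioo_iff hlt).1 hsub⟩

theorem lt_b_of_leftEnd_lt (hL : IsOuterCover P a b L) (hP : IsIntervalCollection P)
    (hx : x ∈ ⋃₀ P) (hk : k ∈ L.S) (hk1 : k + 1 ∈ L.S) (h : leftEnd P x < L.a (k + 1)) :
    x < L.b k := by
  obtain ⟨c, d, hcd, hxcd, hc⟩ := hP.exists_lt_of_leftEnd_lt hx h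
  obtain ⟨j, hj, hjc, hdj⟩ := hL.exists_le_and_le hcd (hxcd.1.trans hxcd.2)
  have hjk : j ≤ k :=
    Int.lt_add_one_iff.1 ((L.strictMonoOn_a.lt_iff_lt hj hk1).1 (hjc.trans_lt hc))
  calc x < d := hxcd.2
    _ ≤ L.b j := hdj
    _ ≤ L.b k := L.strictMonoOn_b.monotoneOn hj hk hjk

theorem rightEnd_le_b (hL : IsOuterCover P a b L) (hP : IsIntervalCollection P)
    (hx : x ∈ ⋃₀ P) (hk : k ∈ L.S) (hk1 : k + 1 ∈ L.S) (h : x ≤ L.b k) :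
    rightEnd P x ≤ L.b (k + 1) := by
  by_contra! hlt
  obtain ⟨c, d, hcd, hxcd, hd⟩ := hP.exists_lt_of_lt_rightEnd hx hlt
  obtain ⟨j, hj, hjc, hdj⟩ := hL.exists_le_and_le hcd (hxcd.1.trans hxcd.2)
  have hjk : j ≤ k + 1 := L.le_add_one_of_a_lt_b hk hj (by linarith [hxcd.1])
  have := L.strictMonoOn_b.monotoneOn hj hk1 hjk
  linarith

end IsOuterCover

/-- The sequence `a, x 1, …, x n, b, b, b, …`. -/
def extendByEndpoints (a b : ℝ) (n : ℕ) (x : ℕ → ℝ) (i : ℕ) : ℝ :=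
  if i = 0 then a else if i ≤ n then x i else b

/-- The sequences `y 1, …, y n` of the theorem: iterating `R_P` leads from a point `y 1` with
`L_P(y 1) = a` to `b`. Both endpoints are part of the sequence, as `y 0 = a` and as `y i = b` for
every `i > n`. -/
structure IsRightEndChain (P : Set (Set ℝ)) (a b : ℝ) (n : ℕ) (y : ℕ → ℝ) : Prop where
  one_le : 1 ≤ n
  zero : y 0 = a
  eq_of_lt : ∀ i, n < i → y i = b
  mem : ∀ i, 1 ≤ i → i ≤ n → y i ∈ ⋃₀ P
  leftEnd_one : leftEnd P (y 1) = a
  rightEnd_eq : ∀ i, 1 ≤ i → i ≤ n → rightEnd P (y i) = y (i + 1)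

theorem isRightEndChain_extendByEndpoints {P : Set (Set ℝ)} {a b : ℝ} {n : ℕ} {x : ℕ → ℝ}
    (hn : 1 ≤ n) (hmem : ∀ i, 1 ≤ i → i ≤ n → x i ∈ ⋃₀ P) (hfirst : leftEnd P (x 1) = a)
    (hstep : ∀ i, 1 ≤ i → i < n → rightEnd P (x i) = x (i + 1)) (hlast : rightEnd P (x n) = b) :
    IsRightEndChain P a b n (extendByEndpoints a b n x) := by
  have eq_x : ∀ i, 1 ≤ i → i ≤ n → extendByEndpoints a b n x i = x i := fun i h1 hi => by
    simp [extendByEndpoints, hi, Nat.ne_of_gt h1]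
  have eq_b : ∀ i, n < i → extendByEndpoints a b n x i = b := fun i hi => by
    simp [extendByEndpoints, hi.not_ge, Nat.ne_of_gt (n.zero_le.trans_lt hi)]
  refine ⟨hn, rfl, eq_b, fun i h1 hi => eq_x i h1 hi ▸ hmem i h1 hi, by rwa [eq_x 1 le_rfl hn],
    fun i h1 hi => ?_⟩
  rw [eq_x i h1 hi]
  rcases hi.eq_or_lt with rfl | hi
  · rw [hlast, eq_b _ i.lt_succ_self]
  · rw [hstep i h1 hi, eq_x _ (by omega) hi]

/-- The admissible positions of the `i`-th left endpoint of the inner cover, relative to the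
points `y 0 < y 1 < …`. -/
def leftSlot (y : ℕ → ℝ) : ℕ → Set ℝ
  | 0 => {y 0}
  | i + 1 => Ioo (y i) (y (i + 1))

section leftSlot

variable {y : ℕ → ℝ}

theorem le_of_mem_leftSlot {i : ℕ} {s : ℝ} (hs : s ∈ leftSlot y i) : s ≤ y i := by
  cases i with
  | zero => exact hs.le
  | succ i => exact hs.2.le

theorem isLinked_of_mem_leftSlot {N : ℕ} {A B : ℕ → ℝ} (hA : ∀ i ≤ N, A i ∈ leftSlot y i)
    (hAB : ∀ i < N, A (i + 1) < B i) (hB : ∀ i < N, B i < y (i + 1)) (hN : B N = y N)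
    (hlast : A N < B N) : IsLinked N A B := by
  have hA_le : ∀ i ≤ N, A i ≤ y i := fun i hi => le_of_mem_leftSlot (hA i hi)
  have hA_gt : ∀ i < N, y i < A (i + 1) := fun i hi => (hA (i + 1) hi).1
  have hB_ge : ∀ i ≤ N, y i ≤ B i := fun i hi => by
    rcases hi.eq_or_lt with rfl | hi
    · exact hN.ge
    · exact ((hA_gt i hi).trans (hAB i hi)).le
  have hA_lt : ∀ i < N, A i < A (i + 1) := fun i hi => (hA_le i hi.le).trans_lt (hA_gt i hi)
  refine ⟨fun i hi => ?_, hA_lt, fun i hi => (hB i hi).trans_le (hB_ge (i + 1) hi), hAB,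
    fun i hi => (hB i (by omega)).trans (hA_gt (i + 1) (by omega))⟩
  rcases hi.eq_or_lt with rfl | hi
  · exact hlast
  · exact (hA_lt i hi).trans (hAB i hi)

end leftSlot

namespace IsRightEndChain

variable {P : Set (Set ℝ)} {a b : ℝ} {n : ℕ} {y : ℕ → ℝ}

theorem lt_succ (hy : IsRightEndChain P a b n y) (hP : IsIntervalCollection P)
    (hU : ⋃₀ P = Ioo a b) {i : ℕ} (hi : i ≤ n) : y i < y (i + 1) := by
  rcases Nat.eq_zero_or_pos i with rfl | h1
  · have hmem : y 1 ∈ Ioo a b := hU ▸ hy.mem 1 le_rfl hy.one_le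
    exact hy.zero.trans_lt hmem.1
  · exact hy.rightEnd_eq i h1 hi ▸ lt_rightEnd hP (hU ▸ bddAbove_Ioo) (hy.mem i h1 hi)

theorem monotone (hy : IsRightEndChain P a b n y) (hP : IsIntervalCollection P)
    (hU : ⋃₀ P = Ioo a b) : Monotone y := by
  refine monotone_nat_of_le_succ fun i => ?_
  rcases le_or_gt i n with hi | hi
  · exact (hy.lt_succ hP hU hi).le
  · rw [hy.eq_of_lt i hi, hy.eq_of_lt (i + 1) (by omega)]

theorem lt_of_lt (hy : IsRightEndChain P a b n y) (hP : IsIntervalCollection P)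
    (hU : ⋃₀ P = Ioo a b) {i j : ℕ} (hij : i < j) (hi : i ≤ n) : y i < y j :=
  (hy.lt_succ hP hU hi).trans_le (hy.monotone hP hU hij)

/-! ### Upper bound for outer covers -/

theorem apply_succ_le_b (hy : IsRightEndChain P a b n y) (hP : IsIntervalCollection P)
    {L : LinkedList} (hL : IsOuterCover P a b L) {i : ℤ} (hi : i ∈ L.S) {k : ℕ} (hk : k ≤ n)
    (hik : i + k + 1 ∈ L.S) : y (k + 1) ≤ L.b (i + k) := by
  induction k with
  | zero =>
    have hi1 : i + 1 ∈ L.S := by simpa using hik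
    have ha : a < L.a (i + 1) :=
      (LinkedList.bounds_of_union_eq_Ioo hL.1 hi).1.trans_lt (L.mono_a i hi hi1)
    simpa using (hL.lt_b_of_leftEnd_lt hP (hy.mem 1 le_rfl hy.one_le) hi hi1
      (hy.leftEnd_one.trans_lt ha)).le
  | succ k ih =>
    push_cast [← add_assoc] at hik ⊢
    have hk0 : i + k ∈ L.S := L.ordConnected.out hi hik ⟨by omega, by omega⟩
    have hk1 : i + k + 1 ∈ L.S := L.ordConnected.out hi hik ⟨by omega, by omega⟩
    rw [← hy.rightEnd_eq (k + 1) (by omega) hk]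
    exact hL.rightEnd_le_b hP (hy.mem (k + 1) (by omega) hk) hk0 hk1 (ih (by omega) hk1)

theorem finite_and_ncard_le_of_isOuterCover (hy : IsRightEndChain P a b n y)
    (hP : IsIntervalCollection P) {L : LinkedList} (hL : IsOuterCover P a b L) :
    L.S.Finite ∧ L.S.ncard ≤ n + 1 := by
  refine finite_and_ncard_le_of_forall_le_add L.nonempty fun i hi j hj => ?_
  by_contra! hij
  have hn : i + n ∈ L.S := L.ordConnected.out hi hj ⟨by omega, by omega⟩
  have hn1 : i + n + 1 ∈ L.S := L.ordConnected.out hi hj ⟨by omega, by omega⟩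
  refine lt_irrefl b ?_
  calc b = y (n + 1) := (hy.eq_of_lt _ n.lt_succ_self).symm
    _ ≤ L.b (i + n) := hy.apply_succ_le_b hP hL hi le_rfl hn1
    _ < L.b (i + n + 1) := L.mono_b _ hn hn1
    _ ≤ b := (LinkedList.bounds_of_union_eq_Ioo hL.1 hn1).2

/-! ### A small outer cover -/

-- For `k = 0` the truncated index `2 * k - 1` is `0`, so the first interval starts at `a`.
theorem isLinked_outer (hy : IsRightEndChain P a b n y) (hP : IsIntervalCollection P)
    (hU : ⋃₀ P = Ioo a b) :
    IsLinked (n / 2) (fun k => y (2 * k - 1)) (fun k => y (2 * k + 2)) where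
  lt k hk := hy.lt_of_lt hP hU (by omega) (by omega)
  mono_a k hk := hy.lt_of_lt hP hU (by omega) (by omega)
  mono_b k hk := hy.lt_of_lt hP hU (by omega) (by omega)
  overlap k hk := hy.lt_of_lt hP hU (by omega) (by omega)
  gap k hk := hy.lt_of_lt hP hU (by omega) (by omega)

theorem exists_le_and_le (hy : IsRightEndChain P a b n y) (hP : IsIntervalCollection P)
    (hU : ⋃₀ P = Ioo a b) {c d : ℝ} (hcd : Ioo c d ∈ P) (hlt : c < d) :
    ∃ i, y i ≤ c ∧ d ≤ y (i + 2) := by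
  obtain ⟨hac, hdb⟩ : a ≤ c ∧ d ≤ b :=
    (Ioo_subset_Ioo_iff hlt).1 (hU ▸ subset_sUnion_of_mem hcd)
  obtain ⟨i, hi, hci⟩ : ∃ i, ¬ c < y i ∧ c < y (i + 1) :=
    Nat.exists_not_and_succ_of_not_zero_of_exists (p := fun i => c < y i)
      (not_lt.2 (hy.zero.trans_le hac))
      ⟨n + 1, by rw [hy.eq_of_lt _ n.lt_succ_self]; exact hlt.trans_le hdb⟩
  refine ⟨i, not_lt.1 hi, ?_⟩
  rcases le_or_gt (i + 1) n with hin | hin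
  · rcases le_or_gt d (y (i + 1)) with hd | hd
    · exact hd.trans (hy.monotone hP hU (by omega))
    · rw [← hy.rightEnd_eq (i + 1) (by omega) hin]
      exact le_rightEnd (hU ▸ bddAbove_Ioo) hcd ⟨hci, hd⟩
  · rwa [hy.eq_of_lt (i + 2) (by omega)]

theorem exists_isOuterCover (hy : IsRightEndChain P a b n y) (hP : IsIntervalCollection P)
    (hU : ⋃₀ P = Ioo a b) : ∃ L, IsOuterCover P a b L ∧ L.S.ncard = n / 2 + 1 := by
  have hlinked := hy.isLinked_outer hP hU
  have hmono := hy.monotone hP hU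
  refine ⟨hlinked.toLinkedList, ⟨?_, fun J hJ => ?_⟩, hlinked.ncard_S_toLinkedList⟩
  · rw [hlinked.union_toLinkedList, hy.eq_of_lt (2 * (n / 2) + 2) (by omega)]
    exact congrArg (Ioo · b) hy.zero
  · obtain ⟨c, d, hlt, rfl⟩ := hP J hJ
    obtain ⟨i, hic, hdi⟩ := hy.exists_le_and_le hP hU hJ hlt
    let k := min ((i + 1) / 2) (n / 2)
    have hk : y (i + 2) ≤ y (2 * k + 2) := by
      rcases le_or_gt (i + 2) (2 * k + 2) with h | h
      · exact hmono h
      · rw [hy.eq_of_lt (i + 2) (by omega), hy.eq_of_lt (2 * k + 2) (by omega)]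
    refine ⟨k, hlinked.natCast_mem_S_toLinkedList (min_le_right _ _), ?_⟩
    rw [hlinked.interval_toLinkedList]
    exact Ioo_subset_Ioo ((hmono (by omega)).trans hic) (hdi.trans hk)

/-! ### An inner cover -/

theorem exists_approxDominated_of_mem_Ioo (hy : IsRightEndChain P a b n y)
    (hP : IsIntervalCollection P) (hU : ⋃₀ P = Ioo a b) {i : ℕ} (hi : i ≤ n) {t : ℝ}
    (ht : t ∈ Ioo (y i) (y (i + 1))) :
    ∃ s ∈ leftSlot y i, ∃ u ∈ Ioo t (y (i + 1)), ApproxDominated P (Ioo s u) := by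
  cases i with
  | zero =>
    obtain ⟨u, htu, huy⟩ := exists_between ht.2
    have h0 : y 0 = leftEnd P (y 1) := hy.zero.trans hy.leftEnd_one.symm
    refine ⟨y 0, rfl, u, ⟨htu, huy⟩, h0 ▸ ?_⟩
    exact approxDominated_Ioo_leftEnd hP (hy.mem 1 le_rfl hy.one_le)
      (h0 ▸ ht.1.trans htu) huy.le
  | succ i =>
    have hmem := hy.mem (i + 1) (by omega) hi
    have hright := hy.rightEnd_eq (i + 1) (by omega) hi
    obtain ⟨c, d, hcd, hycd, htd⟩ := hP.exists_lt_of_lt_rightEnd hmem (ht.2.trans_eq hright.symm)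
    have hd : d ≤ y (i + 2) := (le_rightEnd (hU ▸ bddAbove_Ioo) hcd hycd).trans_eq hright
    obtain ⟨s, hs, hsy⟩ := exists_between (max_lt hycd.1 (hy.lt_succ hP hU (by omega)))
    obtain ⟨hcs, hys⟩ := max_lt_iff.1 hs
    obtain ⟨u, htu, hud⟩ := exists_between htd
    have hdom : Dominated P (Ioo s u) := ⟨_, hcd, Ioo_subset_Ioo hcs.le hud.le⟩
    exact ⟨s, ⟨hys, hsy⟩, u, ⟨htu, hud.trans_le hd⟩,
      hdom.approxDominated (hsy.trans (ht.1.trans htu))⟩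

theorem exists_isInnerCover (hy : IsRightEndChain P a b n y) (hP : IsIntervalCollection P)
    (hU : ⋃₀ P = Ioo a b) : ∃ L, IsInnerCover P a b L ∧ L.S.ncard = n + 2 := by
  obtain ⟨v, hyv, hvy⟩ := exists_between (hy.lt_succ hP hU le_rfl)
  have hv : v ∈ leftSlot y (n + 1) := ⟨hyv, hvy⟩
  have hdom : ApproxDominated P (Ioo v (y (n + 1))) := by
    have hright := hy.rightEnd_eq n hy.one_le le_rfl
    exact hright ▸ approxDominated_Ioo_rightEnd hP (hy.mem n hy.one_le le_rfl) hyv.le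
      (hvy.trans_eq hright.symm)
  obtain ⟨I, hI_last, hI, hI_link⟩ := exists_seq_of_backward_step (α := ℝ × ℝ)
    (D := fun i I => I.1 ∈ leftSlot y i ∧ ApproxDominated P (Ioo I.1 I.2))
    (r := fun i I J => J.1 < I.2 ∧ I.2 < y (i + 1)) (t := (v, y (n + 1)))
    ⟨hv, hdom⟩ fun i hi J hJ => by
      obtain ⟨s, hs, u, hu, hsu⟩ :=
        hy.exists_approxDominated_of_mem_Ioo hP hU (Nat.lt_succ_iff.1 hi) hJ.1
      exact ⟨(s, u), ⟨hs, hsu⟩, hu⟩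
  have hlinked : IsLinked (n + 1) (fun i => (I i).1) (fun i => (I i).2) :=
    isLinked_of_mem_leftSlot (fun i hi => (hI i hi).1) (fun i hi => (hI_link i hi).1)
      (fun i hi => (hI_link i hi).2) (by simp only [hI_last]) (by simpa only [hI_last] using hvy)
  refine ⟨hlinked.toLinkedList, ⟨?_, fun i hi => ?_⟩, hlinked.ncard_S_toLinkedList⟩
  · have h0 : (I 0).1 = a := (hI 0 (Nat.zero_le _)).1.trans hy.zero
    have hlast : (I (n + 1)).2 = b := by rw [hI_last, hy.eq_of_lt _ n.lt_succ_self]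
    rw [hlinked.union_toLinkedList, h0, hlast]
  · obtain ⟨k, hk, rfl⟩ := hlinked.exists_natCast_eq_of_mem_S hi
    rw [hlinked.interval_toLinkedList]
    exact (hI k hk).2

end IsRightEndChain

/-- Suppose `⋃₀ P = (a, b)` and `x 1, …, x n ∈ (a, b)` satisfy
`L_P(x 1) = a`, `R_P(x i) = x (i+1)` for `1 ≤ i < n`, and `R_P(x n) = b`. Then: (1) every
outer cover of `(a, b)` has at most `n + 1` elements; (2) there is an outer cover with
`⌊n/2⌋ + 1` elements; (3) there is an inner cover with `n + 2` elements. -/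
theorem stmt17 (P : Set (Set ℝ)) (a b : ℝ) (hab : a < b)
    (hP : IsIntervalCollection P) (hU : ⋃₀ P = Ioo a b)
    (n : ℕ) (hn : 1 ≤ n) (x : ℕ → ℝ)
    (hmem : ∀ i : ℕ, 1 ≤ i → i ≤ n → x i ∈ Ioo a b)
    (hfirst : leftEnd P (x 1) = a)
    (hstep : ∀ i : ℕ, 1 ≤ i → i < n → rightEnd P (x i) = x (i + 1))
    (hlast : rightEnd P (x n) = b) :
    (∀ L : LinkedList, IsOuterCover P a b L → L.S.Finite ∧ L.S.ncard ≤ n + 1) ∧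
    (∃ L : LinkedList, IsOuterCover P a b L ∧ L.S.ncard = n / 2 + 1) ∧
    (∃ L : LinkedList, IsInnerCover P a b L ∧ L.S.ncard = n + 2) := by
  have hy := isRightEndChain_extendByEndpoints hn (hU ▸ hmem) hfirst hstep hlast
  exact ⟨fun _ hL => hy.finite_and_ncard_le_of_isOuterCover hP hL,
    hy.exists_isOuterCover hP hU, hy.exists_isInnerCover hP hU⟩
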